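/- (Riemann–Roch for graphs with loops) Let G be a connected graph of genus g = |E(G)| − |V(G)| + 1, possibly with loops, and let K#_G := Σ_{v∈V(G)} (val(v) − 2) v. Then for every D ∈ Div(G): r#_G(D) − r#_G(K#_G − D) = deg D − g + 1. -/

import Mathlib

/-- A finite multigraph: vertices `V`, edges `E`, each edge has an (arbitrarily
ordered) pair of endpoints.  Loops are edges whose two endpoints coincide. -/
structure Multigraph where
  V : Type
  E : Type
  [decV : DecidableEq V]
  [fintV : Fintype V]
  [decE : DecidableEq E]
  [fintE : Fintype E]
  ends : E → V × V

attribute [instance] Multigraph.decV Multigraph.fintV Multigraph.decE Multigraph.fintE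

namespace Multigraph

variable (G : Multigraph)

/-- Two vertices are adjacent if some edge joins them. -/
def Adj (v w : G.V) : Prop := ∃ e : G.E, G.ends e = (v, w) ∨ G.ends e = (w, v)

/-- A multigraph is connected if it is nonempty and any two vertices are joined by a walk. -/
def Connected : Prop := Nonempty G.V ∧ ∀ v w : G.V, Relation.ReflTransGen G.Adj v w

/-- The number of edges joining `v` and `w`. -/
def numEdges (v w : G.V) : ℕ :=
  (Finset.univ.filter fun e : G.E => G.ends e = (v, w) ∨ G.ends e = (w, v)).card

/-- The number of loops based at `v`. -/
def numLoops (v : G.V) : ℕ :=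
  (Finset.univ.filter fun e : G.E => G.ends e = (v, v)).card

/-- The valency of `v` (loops count twice). -/
def valency (v : G.V) : ℕ :=
  ∑ e : G.E, ((if (G.ends e).1 = v then 1 else 0) + (if (G.ends e).2 = v then 1 else 0))

/-- The intersection product on vertices: `(v·w)` is the number of edges joining `v` and
`w` when `v ≠ w`, and `(v·v) = -val(v) + 2 loop(v)`. -/
def inter (v w : G.V) : ℤ :=
  if v = w then -(G.valency v : ℤ) + 2 * (G.numLoops v : ℤ) else (G.numEdges v w : ℤ)

/-- The principal divisor `T_v = Σ_w (v·w) w`. -/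
def T (v : G.V) : G.V → ℤ := fun w => G.inter v w

/-- The group of principal divisors, generated by the `T_v`. -/
def Prin : AddSubgroup (G.V → ℤ) := AddSubgroup.closure (Set.range G.T)

/-- The Jacobian group `Div(G)/Prin(G)`. -/
abbrev Jac := (G.V → ℤ) ⧸ G.Prin

/-- A divisor is effective if all its coefficients are nonnegative. -/
def Effective {α : Type} (D : α → ℤ) : Prop := ∀ v, 0 ≤ D v

/-- The degree of a divisor. -/
def degree {α : Type} [Fintype α] (D : α → ℤ) : ℤ := ∑ v, D v

/-- The Baker–Norine rank of a divisor: `-1` if no effective divisor is linearly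
equivalent to `D`, and otherwise the largest `k ≥ 0` such that for every effective
divisor `E` of degree `k` some effective divisor is linearly equivalent to `D - E`. -/
noncomputable def rank (D : G.V → ℤ) : ℤ :=
  sSup {r : ℤ | r = -1 ∨ (0 ≤ r ∧ ∀ E : G.V → ℤ, Effective E → degree E = r →
      ∃ F : G.V → ℤ, Effective F ∧ D - E - F ∈ G.Prin)}

/-- An edge is a loop if its two endpoints coincide. -/
def IsLoop (e : G.E) : Prop := (G.ends e).1 = (G.ends e).2

/-- The refinement of `G` obtained by inserting `n e` new vertices in the interior of
each edge `e` (subdividing `e` into `n e + 1` edges). -/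
def subdivide (n : G.E → ℕ) : Multigraph where
  V := G.V ⊕ (Σ e : G.E, Fin (n e))
  E := Σ e : G.E, Fin (n e + 1)
  ends := fun x =>
    (if h : (x.2 : ℕ) = 0 then Sum.inl (G.ends x.1).1
        else Sum.inr ⟨x.1, ⟨(x.2 : ℕ) - 1, by have := x.2.isLt; omega⟩⟩,
     if h : (x.2 : ℕ) = n x.1 then Sum.inl (G.ends x.1).2
        else Sum.inr ⟨x.1, ⟨(x.2 : ℕ), by have := x.2.isLt; omega⟩⟩)

/-- The natural map `σ* : Div(G) → Div(G̃)` to a refinement, extending a divisor by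
zero on the new vertices. -/
def subdivMap (n : G.E → ℕ) (D : G.V → ℤ) : (G.subdivide n).V → ℤ := Sum.elim D 0

/-- `Ĝ`: the loopless refinement obtained by inserting one new vertex in the interior of
every loop-edge. -/
def hat : Multigraph := G.subdivide fun e => if (G.ends e).1 = (G.ends e).2 then 1 else 0

/-- The rank `r#_G(D) := r_{Ĝ}(σ* D)`. -/
noncomputable def rankSharp (D : G.V → ℤ) : ℤ :=
  G.hat.rank (G.subdivMap (fun e => if (G.ends e).1 = (G.ends e).2 then 1 else 0) D)

/-- A multigraph is loopless if no edge is a loop. -/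
def Loopless : Prop := ∀ e : G.E, (G.ends e).1 ≠ (G.ends e).2

/-- The genus (first Betti number) `g = |E| - |V| + 1` of a connected graph. -/
def genus : ℤ := (Fintype.card G.E : ℤ) - (Fintype.card G.V : ℤ) + 1

/-- The canonical divisor `K#_G = Σ_v (val(v) - 2) v`. -/
def canonical : G.V → ℤ := fun v => (G.valency v : ℤ) - 2

/-- The loopless graph obtained from `G` by removing all loop-edges. -/
def removeLoops : Multigraph where
  V := G.V
  E := {e : G.E // (G.ends e).1 ≠ (G.ends e).2}
  ends := fun e => G.ends e.1

/-- The virtual graph `G^ω` of a weighted graph `(G, ω)`: attach `ω v` loops at each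
vertex `v`. -/
def virt (w : G.V → ℕ) : Multigraph where
  V := G.V
  E := G.E ⊕ (Σ v : G.V, Fin (w v))
  ends := Sum.elim G.ends fun p => (p.1, p.1)

/-- The rank of a divisor on the weighted graph `(G, ω)`: `r_{(G,ω)}(D) := r#_{G^ω}(D)`. -/
noncomputable def rankW (w : G.V → ℕ) (D : G.V → ℤ) : ℤ := (G.virt w).rankSharp D

/-- The canonical divisor of the weighted graph `(G, ω)`. -/
def canonicalW (w : G.V → ℕ) : G.V → ℤ := fun v => (G.valency v : ℤ) + 2 * (w v : ℤ) - 2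

/-- The genus of the weighted graph `(G, ω)`: `b₁(G) + Σ_v ω(v)`. -/
def genusW (w : G.V → ℕ) : ℤ := G.genus + ∑ v, (w v : ℤ)

/-- The rose `R_g`: one vertex and `g` loop-edges. -/
def rose (g : ℕ) : Multigraph where
  V := Unit
  E := Fin g
  ends := fun _ => ((), ())

/-- The subgraph of `G` determined by a set of vertices and a set of edges with
endpoints among them. -/
def subgraph (Vs : Finset G.V) (Es : Finset G.E)
    (h : ∀ e ∈ Es, (G.ends e).1 ∈ Vs ∧ (G.ends e).2 ∈ Vs) : Multigraph where
  V := {x : G.V // x ∈ Vs}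
  E := {e : G.E // e ∈ Es}
  ends := fun e => (⟨(G.ends e.1).1, (h e.1 e.2).1⟩, ⟨(G.ends e.1).2, (h e.1 e.2).2⟩)

/-- Extension of a divisor on a subgraph by zero: `ι_* : Div(H) → Div(G)`. -/
def iota (Vs : Finset G.V) (D : {x : G.V // x ∈ Vs} → ℤ) : G.V → ℤ :=
  fun x => if h : x ∈ Vs then D ⟨x, h⟩ else 0

end Multigraph

namespace Multigraph

/-- A decomposition `G = H₁ ∨ H₂` of `G` associated to a cut vertex `v`:  `H₁`, `H₂` are
connected subgraphs with `V(H₁) ∩ V(H₂) = {v}`, `E(H₁) ∩ E(H₂) = ∅`, covering `G`. -/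
structure Wedge (G : Multigraph) where
  v : G.V
  V1 : Finset G.V
  V2 : Finset G.V
  hv1 : v ∈ V1
  hv2 : v ∈ V2
  E1 : Finset G.E
  E2 : Finset G.E
  cover_V : V1 ∪ V2 = Finset.univ
  inter_V : V1 ∩ V2 = {v}
  cover_E : E1 ∪ E2 = Finset.univ
  disj_E : E1 ∩ E2 = ∅
  ends1 : ∀ e ∈ E1, (G.ends e).1 ∈ V1 ∧ (G.ends e).2 ∈ V1
  ends2 : ∀ e ∈ E2, (G.ends e).1 ∈ V2 ∧ (G.ends e).2 ∈ V2
  conn1 : (G.subgraph V1 E1 ends1).Connected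
  conn2 : (G.subgraph V2 E2 ends2).Connected

/-- The first subgraph `H₁` of a wedge decomposition. -/
def Wedge.H1 {G : Multigraph} (W : G.Wedge) : Multigraph := G.subgraph W.V1 W.E1 W.ends1

/-- The second subgraph `H₂` of a wedge decomposition. -/
def Wedge.H2 {G : Multigraph} (W : G.Wedge) : Multigraph := G.subgraph W.V2 W.E2 W.ends2

variable (G : Multigraph)

/-- The divisor `div(f)` of an integer-valued function `f` on the vertices
(loops contribute zero). -/
def divOf (f : G.V → ℤ) : G.V → ℤ := fun v =>
  ∑ e : G.E, ((if (G.ends e).1 = v then f v - f (G.ends e).2 else 0)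
            + (if (G.ends e).2 = v then f v - f (G.ends e).1 else 0))

/-- An isomorphism of multigraphs (edges may be matched with either orientation). -/
structure Iso (G H : Multigraph) where
  vEquiv : G.V ≃ H.V
  eEquiv : G.E ≃ H.E
  compat : ∀ e : G.E,
    H.ends (eEquiv e) = (vEquiv (G.ends e).1, vEquiv (G.ends e).2) ∨
    H.ends (eEquiv e) = (vEquiv (G.ends e).2, vEquiv (G.ends e).1)

end Multigraph

/-!
The argument for loopless graphs is that of Baker and Norine. Fix a vertex `q` of a connected graph.
Every divisor is equivalent to a `q`-reduced one, and Dhar's burning algorithm run on a `q`-reduced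
divisor which is not effective produces an acyclic orientation whose divisor
`ν = Σ_v (indeg(v) - 1) v` dominates it; no such `ν` is equivalent to an effective divisor. Hence
`r(D) + 1` is the minimum of `deg⁺(D' - ν)` over `D'` equivalent to `D` and over all `ν`. Reversing
orientations sends `ν` to `K - ν`, so it turns the positive part of `D' - ν` into its negative part;
since `deg ν = g - 1`, the minima for `D` and `K - D` differ by `deg D - g + 1`.

Subdividing the loops changes neither the genus nor the degree of a divisor, and the new vertices,
having valency `2`, do not contribute to the canonical divisor.
-/

namespace Multigraph

open Finset Matrix

variable (G : Multigraph)

section Divisors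

lemma numEdges_comm (v w : G.V) : G.numEdges v w = G.numEdges w v := by
  simp only [numEdges, or_comm]

lemma numEdges_self (v : G.V) : G.numEdges v v = G.numLoops v := by
  simp only [numEdges, numLoops, or_self]

variable {G} in
lemma Loopless.numLoops_eq_zero (hl : G.Loopless) (v : G.V) : G.numLoops v = 0 := by
  refine card_eq_zero.2 (filter_eq_empty_iff.2 fun e _ he => hl e ?_)
  rw [he]

/-- A loop at `v` meets `v` with both of its ends but is counted once by `numEdges v v`;
this is the source of the last term. -/
lemma sum_incident_eq_sum_numEdges {M : Type*} [AddCommMonoid M] (F : G.V → M) (v : G.V) :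
    ∑ e, ((if (G.ends e).1 = v then F (G.ends e).2 else 0)
        + (if (G.ends e).2 = v then F (G.ends e).1 else 0))
      = ∑ w, G.numEdges v w • F w + G.numLoops v • F v := by
  have h_edge (x y : G.V) : ((if x = v then F y else 0) + (if y = v then F x else 0))
      = ∑ w, (if (x, y) = (v, w) ∨ (x, y) = (w, v) then F w else 0)
        + if (x, y) = (v, v) then F v else 0 := by
    by_cases hx : x = v <;> by_cases hy : y = v <;> simp [hx, hy, or_comm]
  simp only [numEdges, numLoops, card_filter, sum_smul, ite_smul, one_smul, zero_smul]
  rw [sum_comm, ← sum_add_distrib]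
  exact sum_congr rfl fun e _ => h_edge _ _

lemma valency_eq_sum_numEdges (v : G.V) :
    G.valency v = ∑ w, G.numEdges v w + G.numLoops v := by
  simpa only [valency, smul_eq_mul, mul_one] using
    G.sum_incident_eq_sum_numEdges (fun _ => (1 : ℕ)) v

lemma sum_valency : ∑ v, G.valency v = 2 * Fintype.card G.E := by
  simp only [valency]
  rw [sum_comm]
  simp [sum_add_distrib, mul_two, mul_comm]

lemma degree_add (D E : G.V → ℤ) : degree (D + E) = degree D + degree E :=
  sum_add_distrib

lemma degree_sub (D E : G.V → ℤ) : degree (D - E) = degree D - degree E :=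
  sum_sub_distrib ..

lemma degree_canonical : degree G.canonical = 2 * (G.genus - 1) := by
  have h : ∑ v, (G.valency v : ℤ) = 2 * Fintype.card G.E := mod_cast G.sum_valency
  simp only [degree, canonical, genus, sum_sub_distrib, h, sum_const, card_univ, nsmul_eq_mul]
  ring

end Divisors

section Laplacian

lemma divOf_apply (f : G.V → ℤ) (v : G.V) :
    G.divOf f v = ∑ w, G.numEdges v w * (f v - f w) := by
  simpa only [divOf, sub_self, smul_zero, add_zero, nsmul_eq_mul] using
    G.sum_incident_eq_sum_numEdges (fun w => f v - f w) v

/-- The Laplacian `f ↦ div(f)` as a homomorphism, whose image is `Prin(G)`. -/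
def divHom : (G.V → ℤ) →+ (G.V → ℤ) :=
  AddMonoidHom.mk' G.divOf fun f g => by
    funext v
    simp only [Pi.add_apply, divOf_apply, ← sum_add_distrib]
    exact sum_congr rfl fun w _ => by ring

lemma divOf_add (f g : G.V → ℤ) : G.divOf (f + g) = G.divOf f + G.divOf g :=
  map_add G.divHom f g

lemma divOf_zsmul (c : ℤ) (f : G.V → ℤ) : G.divOf (c • f) = c • G.divOf f :=
  map_zsmul G.divHom c f

lemma T_eq_neg_divOf_single (v : G.V) : G.T v = -G.divOf (Pi.single v 1) := by
  funext w
  rw [Pi.neg_apply, divOf_apply]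
  simp only [mul_sub, sum_sub_distrib, Pi.single_apply, mul_ite, mul_one, mul_zero,
    sum_ite_eq', mem_univ, if_true]
  by_cases h : v = w
  · subst h
    simp only [T, inter, if_true, valency_eq_sum_numEdges, numEdges_self]
    push_cast
    ring
  · simp [T, inter, h, Ne.symm h, G.numEdges_comm v w]

lemma Prin_eq_range_divHom : G.Prin = G.divHom.range := by
  refine le_antisymm ((AddSubgroup.closure_le _).2 ?_) ?_
  · rintro _ ⟨v, rfl⟩
    exact ⟨-Pi.single v 1, (map_neg G.divHom _).trans (G.T_eq_neg_divOf_single v).symm⟩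
  · rintro _ ⟨f, rfl⟩
    have hf : f = ∑ v, f v • Pi.single v 1 := by
      simpa only [smul_eq_mul, mul_one] using pi_eq_sum_univ' f
    rw [hf, map_sum]
    refine sum_mem fun v _ => ?_
    have hT : G.divHom (Pi.single v 1) = -G.T v := by
      rw [T_eq_neg_divOf_single, neg_neg]; rfl
    rw [map_zsmul, hT]
    exact zsmul_mem (neg_mem (AddSubgroup.subset_closure (Set.mem_range_self v))) _

lemma mem_Prin_iff {D : G.V → ℤ} : D ∈ G.Prin ↔ ∃ f, G.divOf f = D := by
  rw [Prin_eq_range_divHom]; rfl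

lemma divOf_mem_Prin (f : G.V → ℤ) : G.divOf f ∈ G.Prin :=
  G.mem_Prin_iff.2 ⟨f, rfl⟩

/-- The right-hand side is the Dirichlet form, which makes the symmetry of the Laplacian visible. -/
lemma dotProduct_divOf (f g : G.V → ℤ) :
    g ⬝ᵥ G.divOf f = ∑ e, (g (G.ends e).1 - g (G.ends e).2) *
      (f (G.ends e).1 - f (G.ends e).2) := by
  simp only [dotProduct, divOf, mul_sum]
  rw [sum_comm]
  refine sum_congr rfl fun e _ => ?_
  simp only [mul_add, mul_ite, mul_zero, sum_add_distrib, sum_ite_eq, mem_univ, if_true]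
  ring

lemma dotProduct_divOf_comm (f g : G.V → ℤ) : g ⬝ᵥ G.divOf f = f ⬝ᵥ G.divOf g := by
  simp only [dotProduct_divOf, mul_comm]

variable {G} in
lemma degree_eq_zero_of_mem_Prin {D : G.V → ℤ} (hD : D ∈ G.Prin) : degree D = 0 := by
  obtain ⟨f, rfl⟩ := G.mem_Prin_iff.1 hD
  rw [degree, ← one_dotProduct, dotProduct_divOf]
  simp

/-- The number of edges leaving `A` at the vertex `v` of `A`. -/
def outdegree (A : Finset G.V) (v : G.V) : ℤ := ∑ w ∈ Aᶜ, (G.numEdges v w : ℤ)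

lemma outdegree_nonneg (A : Finset G.V) (v : G.V) : 0 ≤ G.outdegree A v :=
  sum_nonneg fun _ _ => Nat.cast_nonneg _

variable {G} in
lemma divOf_indicator_of_mem {A : Finset G.V} {v : G.V} (hv : v ∈ A) :
    G.divOf ((A : Set G.V).indicator 1) v = G.outdegree A v := by
  rw [divOf_apply, outdegree, ← univ_inter Aᶜ, ← sum_ite_mem]
  refine sum_congr rfl fun w _ => ?_
  by_cases hw : w ∈ A <;> simp [hv, hw]

variable {G} in
lemma divOf_indicator_of_notMem {A : Finset G.V} {v : G.V} (hv : v ∉ A) :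
    G.divOf ((A : Set G.V).indicator 1) v = -G.outdegree Aᶜ v := by
  rw [divOf_apply, outdegree, compl_compl, ← univ_inter A, ← sum_ite_mem, ← sum_neg_distrib]
  refine sum_congr rfl fun w _ => ?_
  by_cases hw : w ∈ A <;> simp [hv, hw]

end Laplacian

section ReducedDivisors

lemma univ_of_forall_exists_insert {α : Type*} [Fintype α] [DecidableEq α]
    {P : Finset α → Prop} {S₀ : Finset α} (h₀ : P S₀)
    (h_insert : ∀ S, P S → S ≠ univ → ∃ u ∉ S, P (insert u S)) : P univ := by
  obtain ⟨S, hS, hmax⟩ := (Set.toFinite {S | P S}).exists_maximal ⟨S₀, h₀⟩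
  by_contra huniv
  obtain ⟨u, huS, hu⟩ := h_insert S hS fun h => huniv (h ▸ hS)
  exact huS (hmax hu (subset_insert u S) (mem_insert_self u S))

variable {G}

lemma Connected.exists_outdegree_compl_pos (hG : G.Connected) {S : Finset G.V}
    (hS : S.Nonempty) (hSu : S ≠ univ) : ∃ u ∉ S, 0 < G.outdegree Sᶜ u := by
  by_contra! hcon
  obtain ⟨s, hs⟩ := hS
  refine hSu (eq_univ_of_forall fun x => ?_)
  induction hG.2 s x with
  | refl => exact hs
  | @tail v u _ huv ih =>
    by_contra hu
    obtain ⟨e, he⟩ := huv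
    have h_edge : 0 < G.numEdges u v := card_pos.2 ⟨e, by simpa using he.symm⟩
    have h_le : (G.numEdges u v : ℤ) ≤ G.outdegree Sᶜ u :=
      single_le_sum (f := fun w => (G.numEdges u w : ℤ)) (fun _ _ => Nat.cast_nonneg _)
        (by simpa using ih)
    have := hcon u hu
    omega

/-- A potential `b ≥ 0`, vanishing at `q` and attaining its maximum everywhere outside `S`, which
is strictly superharmonic on `S \ {q}`. For `S = V(G)` it is used as a weight that decreases
whenever a set of vertices avoiding `q` is fired. -/
structure IsSuperharmonicOn (q : G.V) (S : Finset G.V) (b : G.V → ℤ) : Prop where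
  apply_base : b q = 0
  nonneg (v : G.V) : 0 ≤ b v
  le_of_notMem {u : G.V} (hu : u ∉ S) (v : G.V) : b v ≤ b u
  divOf_pos {v : G.V} (hv : v ∈ S) (hvq : v ≠ q) : 0 < G.divOf b v

/-- Raising `b` by `1` outside `S` makes it strictly superharmonic at `u`; scaling `b` first
compensates for the loss on `S`. -/
lemma IsSuperharmonicOn.exists_insert {q u : G.V} {S : Finset G.V} {b : G.V → ℤ}
    (hb : IsSuperharmonicOn q S b) (hq : q ∈ S) (hu : u ∉ S) (hSu : 0 < G.outdegree Sᶜ u) :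
    ∃ b', IsSuperharmonicOn q (insert u S) b' := by
  let χ : G.V → ℤ := ((Sᶜ : Finset G.V) : Set G.V).indicator 1
  have hχ_nonneg (v : G.V) : 0 ≤ χ v := Set.indicator_nonneg (fun _ _ => zero_le_one) v
  have hχ_le {w : G.V} (hw : w ∉ S) (v : G.V) : χ v ≤ χ w := by
    by_cases hv : v ∈ S <;> simp [χ, hv, hw]
  let C : ℤ := ∑ v, G.outdegree S v
  have hC (v : G.V) : G.outdegree S v ≤ C :=
    single_le_sum (fun w _ => G.outdegree_nonneg S w) (mem_univ v)
  have hC_nonneg : 0 ≤ C := (G.outdegree_nonneg S q).trans (hC q)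
  refine ⟨(C + 1) • b + χ, ?_, fun v => ?_, fun {w} hw v => ?_, fun {v} hv hvq => ?_⟩
  · simp [hb.apply_base, χ, hq]
  · have := mul_nonneg (by omega : 0 ≤ C + 1) (hb.nonneg v)
    exact add_nonneg this (hχ_nonneg v)
  · have hwS : w ∉ S := fun h => hw (mem_insert_of_mem h)
    exact add_le_add (mul_le_mul_of_nonneg_left (hb.le_of_notMem hwS v) (by omega)) (hχ_le hwS v)
  · rw [divOf_add, divOf_zsmul, Pi.add_apply, Pi.smul_apply, smul_eq_mul]
    rcases mem_insert.1 hv with rfl | hvS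
    · have h_base : 0 ≤ G.divOf b v := by
        rw [divOf_apply]
        exact sum_nonneg fun w _ =>
          mul_nonneg (Nat.cast_nonneg _) (sub_nonneg.2 (hb.le_of_notMem hu w))
      rw [divOf_indicator_of_mem (mem_compl.2 hu)]
      exact add_pos_of_nonneg_of_pos (mul_nonneg (by omega) h_base) hSu
    · rw [divOf_indicator_of_notMem (by simpa using hvS), compl_compl]
      nlinarith [hb.divOf_pos hvS hvq, hC v]

lemma Connected.exists_isSuperharmonicOn_univ (hG : G.Connected) (q : G.V) :
    ∃ b, IsSuperharmonicOn q univ b := by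
  let P (S : Finset G.V) : Prop := q ∈ S ∧ ∃ b, IsSuperharmonicOn q S b
  have h_base : P {q} := ⟨mem_singleton_self q, 0, rfl, fun _ => le_rfl, fun _ _ => le_rfl,
    fun hv hvq => absurd (mem_singleton.1 hv) hvq⟩
  refine (univ_of_forall_exists_insert h_base ?_).2
  rintro S ⟨hq, b, hb⟩ hSu
  obtain ⟨u, hu, hpos⟩ := hG.exists_outdegree_compl_pos ⟨q, hq⟩ hSu
  exact ⟨u, hu, mem_insert_of_mem hq, hb.exists_insert hq hu hpos⟩

/-- `D` is `q`-reduced: it is effective away from `q`, and firing any nonempty set of vertices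
avoiding `q` destroys this. -/
def IsReduced (q : G.V) (D : G.V → ℤ) : Prop :=
  (∀ v, v ≠ q → 0 ≤ D v) ∧
    ∀ A : Finset G.V, A.Nonempty → q ∉ A → ∃ v ∈ A, D v < G.outdegree A v

lemma Connected.exists_effective_away (hG : G.Connected) (q : G.V) (D : G.V → ℤ) :
    ∃ D', D - D' ∈ G.Prin ∧ ∀ v, v ≠ q → 0 ≤ D' v := by
  obtain ⟨b, hb⟩ := hG.exists_isSuperharmonicOn_univ q
  let M : ℤ := ∑ v, |D v|
  refine ⟨D + M • G.divOf b, ?_, fun v hv => ?_⟩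
  · rw [sub_add_cancel_left]
    exact neg_mem (zsmul_mem (G.divOf_mem_Prin b) M)
  · have hM : |D v| ≤ M :=
      single_le_sum (f := fun v => |D v|) (fun _ _ => abs_nonneg _) (mem_univ v)
    have h_neg : -D v ≤ M := (neg_le_abs _).trans hM
    have h_mul : M ≤ M * G.divOf b v :=
      le_mul_of_one_le_right ((abs_nonneg _).trans hM) (hb.divOf_pos (mem_univ v) hv)
    simp only [Pi.add_apply, Pi.smul_apply, smul_eq_mul]
    omega

lemma effective_away_sub_divOf_indicator {q : G.V} {D : G.V → ℤ} {A : Finset G.V}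
    (hD : ∀ v, v ≠ q → 0 ≤ D v) (hA : ∀ v ∈ A, G.outdegree A v ≤ D v) :
    ∀ v, v ≠ q → 0 ≤ (D - G.divOf ((A : Set G.V).indicator 1)) v := by
  intro v hv
  rw [Pi.sub_apply]
  by_cases hvA : v ∈ A
  · rw [divOf_indicator_of_mem hvA]
    exact sub_nonneg.2 (hA v hvA)
  · rw [divOf_indicator_of_notMem hvA, sub_neg_eq_add]
    exact add_nonneg (hD v hv) (G.outdegree_nonneg _ v)

lemma IsSuperharmonicOn.dotProduct_sub_divOf_indicator_lt {q : G.V} {b : G.V → ℤ}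
    (hb : IsSuperharmonicOn q univ b) {A : Finset G.V} (hA : A.Nonempty) (hq : q ∉ A)
    (D : G.V → ℤ) : b ⬝ᵥ (D - G.divOf ((A : Set G.V).indicator 1)) < b ⬝ᵥ D := by
  rw [dotProduct_sub, dotProduct_divOf_comm]
  have h_sum : ((A : Set G.V).indicator 1 : G.V → ℤ) ⬝ᵥ G.divOf b = ∑ v ∈ A, G.divOf b v := by
    simp [dotProduct, Set.indicator_apply]
  rw [h_sum]
  exact sub_lt_self _ (sum_pos (fun v hv => hb.divOf_pos (mem_univ v) fun h => hq (h ▸ hv)) hA)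

lemma IsSuperharmonicOn.dotProduct_nonneg {q : G.V} {S : Finset G.V} {b D : G.V → ℤ}
    (hb : IsSuperharmonicOn q S b) (hD : ∀ v, v ≠ q → 0 ≤ D v) : 0 ≤ b ⬝ᵥ D := by
  refine sum_nonneg fun v _ => ?_
  rcases eq_or_ne v q with rfl | hv
  · rw [hb.apply_base, zero_mul]
  · exact mul_nonneg (hb.nonneg v) (hD v hv)

/-- Among the divisors equivalent to `D` and effective away from `q`, one of least weight for a
strictly superharmonic potential is `q`-reduced. -/
lemma Connected.exists_isReduced (hG : G.Connected) (q : G.V) (D : G.V → ℤ) :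
    ∃ D', D - D' ∈ G.Prin ∧ IsReduced q D' := by
  obtain ⟨b, hb⟩ := hG.exists_isSuperharmonicOn_univ q
  obtain ⟨D', ⟨hDD', hD'⟩, hmin⟩ := exists_minimalFor_of_wellFoundedLT _
    (fun D' : G.V → ℤ => (b ⬝ᵥ D').toNat) (hG.exists_effective_away q D)
  refine ⟨D', hDD', hD', fun A hA hq => ?_⟩
  by_contra! hle
  let D'' := D' - G.divOf ((A : Set G.V).indicator 1)
  have hD'' : ∀ v, v ≠ q → 0 ≤ D'' v := effective_away_sub_divOf_indicator hD' hle
  have hDD'' : D - D'' ∈ G.Prin := by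
    rw [sub_sub_eq_add_sub, add_sub_right_comm]
    exact add_mem hDD' (G.divOf_mem_Prin _)
  have h_lt : b ⬝ᵥ D'' < b ⬝ᵥ D' := hb.dotProduct_sub_divOf_indicator_lt hA hq D'
  have h_nonneg : 0 ≤ b ⬝ᵥ D'' := hb.dotProduct_nonneg hD''
  have h_le : (b ⬝ᵥ D').toNat ≤ (b ⬝ᵥ D'').toNat :=
    hmin ⟨hDD'', hD''⟩ (Int.toNat_le_toNat h_lt.le)
  omega

end ReducedDivisors

section AcyclicOrientations

/-- The divisor `Σ_v (indeg(v) - 1) v` of the acyclic orientation directing every edge from its end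
with the smaller value of `p` to the one with the larger value. Acyclic orientations are encoded by
such functions `p`; an edge between distinct vertices with the same value is left unoriented, so the
notion is only meaningful for injective `p`. -/
def acyclicDivisor (p : G.V → ℤ) : G.V → ℤ :=
  fun v => ∑ w with p w < p v, (G.numEdges v w : ℤ) - 1

/-- The divisors of the acyclic orientations of `G`. -/
def acyclicDivisors : Set (G.V → ℤ) := G.acyclicDivisor '' {p | Function.Injective p}

lemma acyclicDivisors_nonempty : G.acyclicDivisors.Nonempty := by
  obtain ⟨p, hp⟩ := exists_injective_nat G.V
  exact ⟨_, _, Nat.cast_injective.comp hp, rfl⟩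

variable {G}

/-- Where a potential realizing the equivalence is maximal, take a vertex without incoming edges
from other maxima: there the coefficient of `F` is at most `-1`. -/
lemma not_effective_of_mem_acyclicDivisors [Nonempty G.V] {ν F : G.V → ℤ}
    (hν : ν ∈ G.acyclicDivisors) (hF : ν - F ∈ G.Prin) : ¬ Effective F := by
  obtain ⟨p, -, rfl⟩ := hν
  obtain ⟨f, hf⟩ := G.mem_Prin_iff.1 hF
  obtain ⟨m, -, hm⟩ := exists_max_image univ f univ_nonempty
  obtain ⟨v, hv, hv_source⟩ := exists_min_image {v | f v = f m} p ⟨m, by simp⟩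
  simp only [mem_filter_univ] at hv hv_source
  have h_indegree : G.acyclicDivisor p v + 1 ≤ G.divOf f v := by
    rw [acyclicDivisor, sub_add_cancel, divOf_apply, sum_filter]
    refine sum_le_sum fun w _ => ?_
    have hw_max : f w ≤ f v := hv ▸ hm w (mem_univ w)
    split_ifs with hp
    · have hw_ne : f w ≠ f v := fun h => (hv_source w (h.trans hv)).not_gt hp
      exact le_mul_of_one_le_right (Nat.cast_nonneg _) (by omega)
    · exact mul_nonneg (Nat.cast_nonneg _) (sub_nonneg.2 hw_max)
  have hFv : G.divOf f v = G.acyclicDivisor p v - F v := congrFun hf v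
  exact fun hF_eff => by linarith [hF_eff v]

lemma Loopless.acyclicDivisor_add_neg (hl : G.Loopless) {p : G.V → ℤ}
    (hp : Function.Injective p) : G.acyclicDivisor p + G.acyclicDivisor (-p) = G.canonical := by
  funext v
  have h_split : ∑ w, (G.numEdges v w : ℤ)
      = ∑ w with p w < p v, (G.numEdges v w : ℤ) + ∑ w with p v < p w, (G.numEdges v w : ℤ) := by
    simp only [sum_filter, ← sum_add_distrib]
    refine sum_congr rfl fun w _ => ?_
    rcases lt_trichotomy (p w) (p v) with h | h | h
    · simp [h, h.not_gt]
    · simp [hp h, numEdges_self, hl.numLoops_eq_zero]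
    · simp [h, h.not_gt]
  simp only [Pi.add_apply, acyclicDivisor, Pi.neg_apply, neg_lt_neg_iff, canonical,
    valency_eq_sum_numEdges, hl.numLoops_eq_zero, add_zero, Nat.cast_sum, h_split]
  ring

lemma Loopless.canonical_sub_mem_acyclicDivisors (hl : G.Loopless) {ν : G.V → ℤ}
    (hν : ν ∈ G.acyclicDivisors) : G.canonical - ν ∈ G.acyclicDivisors := by
  obtain ⟨p, hp, rfl⟩ := hν
  exact ⟨-p, neg_injective.comp hp, eq_sub_of_add_eq' (hl.acyclicDivisor_add_neg hp)⟩

lemma degree_acyclicDivisor_neg (p : G.V → ℤ) :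
    degree (G.acyclicDivisor (-p)) = degree (G.acyclicDivisor p) := by
  simp only [degree, acyclicDivisor, sum_sub_distrib, sum_filter, Pi.neg_apply, neg_lt_neg_iff]
  rw [sum_comm]
  simp only [numEdges_comm]

lemma Loopless.degree_of_mem_acyclicDivisors (hl : G.Loopless) {ν : G.V → ℤ}
    (hν : ν ∈ G.acyclicDivisors) : degree ν = G.genus - 1 := by
  obtain ⟨p, hp, rfl⟩ := hν
  have h := congrArg degree (hl.acyclicDivisor_add_neg hp)
  rw [degree_add, degree_acyclicDivisor_neg, degree_canonical] at h
  linarith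

/-- A stage of Dhar's burning algorithm started at `q`: the vertices of `B` have burnt in the order
of increasing `p < c`, each `v ≠ q` once more than `D v` edges to it were burning. The unburnt
vertices all carry the value `c`, the time at which the next one burns. -/
structure IsBurning (q : G.V) (D : G.V → ℤ) (B : Finset G.V) (p : G.V → ℤ) (c : ℤ) : Prop where
  base_mem : q ∈ B
  injOn : Set.InjOn p B
  lt_of_mem {v : G.V} (hv : v ∈ B) : p v < c
  eq_of_notMem {v : G.V} (hv : v ∉ B) : p v = c
  le_acyclicDivisor {v : G.V} (hv : v ∈ B) (hvq : v ≠ q) : D v ≤ G.acyclicDivisor p v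

lemma IsBurning.burn {q u : G.V} {D : G.V → ℤ} {B : Finset G.V} {p : G.V → ℤ} {c : ℤ}
    (h : IsBurning q D B p c) (hu : u ∉ B) (hDu : D u < G.outdegree Bᶜ u) :
    IsBurning q D (insert u B) (fun w => if w ∈ insert u B then p w else c + 1) (c + 1) := by
  set p' : G.V → ℤ := fun w => if w ∈ insert u B then p w else c + 1
  have hp' {v : G.V} (hv : v ∈ insert u B) : p' v = p v := if_pos hv
  have hp_le (v : G.V) : p v ≤ c := by
    by_cases hv : v ∈ B
    exacts [(h.lt_of_mem hv).le, (h.eq_of_notMem hv).le]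
  have h_lt_iff {v : G.V} (hv : v ∈ insert u B) (w : G.V) : p' w < p' v ↔ p w < p v := by
    rw [hp' hv]
    by_cases hw : w ∈ insert u B
    · rw [hp' hw]
    · have hwc : p w = c := h.eq_of_notMem fun hwB => hw (mem_insert_of_mem hwB)
      have hw' : p' w = c + 1 := if_neg hw
      have := hp_le v
      omega
  have h_div {v : G.V} (hv : v ∈ insert u B) : G.acyclicDivisor p' v = G.acyclicDivisor p v := by
    simp only [acyclicDivisor, h_lt_iff hv]
  refine ⟨mem_insert_of_mem h.base_mem, ?_, fun {v} hv => ?_, fun hv => if_neg hv,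
    fun {v} hv hvq => ?_⟩
  · have h_inj : Set.InjOn p (insert u B : Finset G.V) := by
      rw [coe_insert, Set.injOn_insert (mem_coe.not.2 hu)]
      refine ⟨h.injOn, ?_⟩
      rintro ⟨v, hv, hvu⟩
      exact (h.lt_of_mem hv).ne (hvu.trans (h.eq_of_notMem hu))
    exact h_inj.congr fun v hv => (hp' hv).symm
  · rw [hp' hv]
    exact Int.lt_add_one_of_le (hp_le v)
  · rw [h_div hv]
    rcases mem_insert.1 hv with rfl | hvB
    · have h_burnt : ({w | p w < p v} : Finset G.V) = B := by
        ext w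
        rw [mem_filter_univ, h.eq_of_notMem hu]
        exact ⟨fun hw => by_contra fun hwB => hw.ne (h.eq_of_notMem hwB), h.lt_of_mem⟩
      rw [outdegree, compl_compl] at hDu
      rw [acyclicDivisor, h_burnt]
      exact Int.le_sub_one_of_lt hDu
    · exact h.le_acyclicDivisor hvB hvq

lemma IsReduced.exists_isBurning_univ {q : G.V} {D : G.V → ℤ} (hD : IsReduced q D) :
    ∃ p c, IsBurning q D univ p c := by
  have h_base : IsBurning q D {q} (fun v => if v = q then 0 else 1) 1 := by
    constructor <;> simp +contextual
  refine univ_of_forall_exists_insert (P := fun B => ∃ p c, IsBurning q D B p c)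
    ⟨_, _, h_base⟩ ?_
  rintro B ⟨p, c, hB⟩ hBu
  obtain ⟨u, hu, hDu⟩ := hD.2 Bᶜ (by rwa [nonempty_iff_ne_empty, Ne, compl_eq_empty_iff])
    (by simpa using hB.base_mem)
  exact ⟨u, mem_compl.1 hu, _, _, hB.burn (mem_compl.1 hu) hDu⟩

lemma IsReduced.effective_or_le_acyclicDivisor {q : G.V} {D : G.V → ℤ} (hD : IsReduced q D) :
    Effective D ∨ ∃ ν ∈ G.acyclicDivisors, D ≤ ν := by
  by_cases hq : 0 ≤ D q
  · left
    intro v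
    rcases eq_or_ne v q with rfl | hv
    exacts [hq, hD.1 v hv]
  · right
    obtain ⟨p, c, hp⟩ := hD.exists_isBurning_univ
    refine ⟨_, ⟨p, by simpa using hp.injOn, rfl⟩, fun v => ?_⟩
    rcases eq_or_ne v q with rfl | hv
    · have : 0 ≤ ∑ w with p w < p v, (G.numEdges v w : ℤ) :=
        sum_nonneg fun _ _ => Nat.cast_nonneg _
      simp only [acyclicDivisor]
      omega
    · exact hp.le_acyclicDivisor (mem_univ v) hv

end AcyclicOrientations

section RiemannRoch

/-- The degrees `deg⁺(D' - ν)`, for `D'` equivalent to `D` and `ν` the divisor of an acyclic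
orientation. By a formula of Baker and Norine the least of them is `r(D) + 1`. -/
def excessDegrees (D : G.V → ℤ) : Set ℤ :=
  {k | ∃ D', D - D' ∈ G.Prin ∧ ∃ ν ∈ G.acyclicDivisors, degree (D' - ν)⁺ = k}

lemma excessDegrees_nonempty (D : G.V → ℤ) : (G.excessDegrees D).Nonempty := by
  obtain ⟨ν, hν⟩ := G.acyclicDivisors_nonempty
  exact ⟨_, D, by rw [sub_self]; exact zero_mem _, ν, hν, rfl⟩

variable {G}

lemma nonneg_of_mem_excessDegrees {D : G.V → ℤ} {k : ℤ} (hk : k ∈ G.excessDegrees D) :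
    0 ≤ k := by
  obtain ⟨D', -, ν, -, rfl⟩ := hk
  exact sum_nonneg fun v _ => posPart_nonneg (D' - ν) v

/-- Reversing the orientation exchanges `(D' - ν)⁺` and `(D' - ν)⁻`. -/
lemma Loopless.sub_degree_mem_excessDegrees (hl : G.Loopless) {D : G.V → ℤ} {k : ℤ}
    (hk : k ∈ G.excessDegrees D) :
    k - degree D + G.genus - 1 ∈ G.excessDegrees (G.canonical - D) := by
  obtain ⟨D', hD', ν, hν, rfl⟩ := hk
  refine ⟨G.canonical - D', ?_, G.canonical - ν, hl.canonical_sub_mem_acyclicDivisors hν, ?_⟩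
  · rw [sub_sub_sub_cancel_left]
    exact sub_mem_comm_iff.1 hD'
  · have h_degree := degree_eq_zero_of_mem_Prin hD'
    have h_parts := congrArg degree (posPart_sub_negPart (D' - ν))
    rw [degree_sub] at h_degree h_parts
    rw [degree_sub, hl.degree_of_mem_acyclicDivisors hν] at h_parts
    rw [sub_sub_sub_cancel_left, ← neg_sub D' ν, posPart_neg]
    linarith

lemma Connected.forall_effective_iff_forall_mem_excessDegrees (hG : G.Connected) (D : G.V → ℤ)
    (k : ℤ) :
    (∀ E : G.V → ℤ, Effective E → degree E = k → ∃ F, Effective F ∧ D - E - F ∈ G.Prin) ↔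
      ∀ s ∈ G.excessDegrees D, k < s := by
  obtain ⟨v₀⟩ := hG.1
  constructor
  · rintro h _ ⟨D', hD', ν, hν, rfl⟩
    by_contra! hk
    let P := (D' - ν)⁺
    let N := (D' - ν)⁻
    let R : G.V → ℤ := Pi.single v₀ (k - degree P)
    have hR : 0 ≤ R := Pi.single_nonneg.2 (sub_nonneg.2 hk)
    have hR_degree : degree R = k - degree P := by simp [R, degree]
    obtain ⟨F, hF, hDF⟩ := h (P + R) (add_nonneg (posPart_nonneg _) hR)
      (by rw [degree_add, hR_degree, add_sub_cancel])
    have h_equiv : ν - (F + N + R) ∈ G.Prin := by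
      have h_parts : P - N = D' - ν := posPart_sub_negPart _
      have h_eq : ν - (F + N + R) = D - (P + R) - F - (D - D') := by
        linear_combination h_parts
      rw [h_eq]
      exact sub_mem hDF hD'
    have : Nonempty G.V := ⟨v₀⟩
    exact not_effective_of_mem_acyclicDivisors hν h_equiv
      (add_nonneg (add_nonneg hF (negPart_nonneg _)) hR)
  · rintro h E hE rfl
    obtain ⟨D', hD', hred⟩ := hG.exists_isReduced v₀ (D - E)
    obtain hF | ⟨ν, hν, hle⟩ := hred.effective_or_le_acyclicDivisor
    · exact ⟨D', hF, hD'⟩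
    · have h_mem : degree (D' + E - ν)⁺ ∈ G.excessDegrees D :=
        ⟨D' + E, by rwa [← sub_sub, sub_right_comm], ν, hν, rfl⟩
      have h_le : (D' + E - ν)⁺ ≤ E := by
        refine sup_le ?_ hE
        rw [add_sub_right_comm]
        exact add_le_of_nonpos_left (sub_nonpos.2 hle)
      exact absurd (h _ h_mem) (sum_le_sum fun v _ => h_le v).not_gt

lemma Connected.isLeast_rank_add_one (hG : G.Connected) (D : G.V → ℤ) :
    IsLeast (G.excessDegrees D) (G.rank D + 1) := by
  have h_bdd : BddBelow (G.excessDegrees D) := ⟨0, fun _ => nonneg_of_mem_excessDegrees⟩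
  obtain ⟨s, hs⟩ : ∃ s, IsLeast (G.excessDegrees D) s :=
    ⟨_, Int.csInf_mem (G.excessDegrees_nonempty D) h_bdd, fun _ => csInf_le h_bdd⟩
  have hs_nonneg : 0 ≤ s := nonneg_of_mem_excessDegrees hs.1
  have h_rank : G.rank D = s - 1 := by
    have h_set : {r : ℤ | r = -1 ∨ (0 ≤ r ∧ ∀ E : G.V → ℤ, Effective E → degree E = r →
        ∃ F : G.V → ℤ, Effective F ∧ D - E - F ∈ G.Prin)} = Set.Icc (-1) (s - 1) := by
      ext r
      simp only [Set.mem_ofPred_eq, Set.mem_Icc,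
        hG.forall_effective_iff_forall_mem_excessDegrees, ← hs.lt_iff]
      omega
    rw [rank, h_set, csSup_Icc (by omega)]
  rwa [h_rank, sub_add_cancel]

theorem Connected.riemann_roch_of_loopless (hG : G.Connected) (hl : G.Loopless) (D : G.V → ℤ) :
    G.rank D - G.rank (G.canonical - D) = degree D - G.genus + 1 := by
  have hD := hG.isLeast_rank_add_one D
  have hK := hG.isLeast_rank_add_one (G.canonical - D)
  have h_le := hK.2 (hl.sub_degree_mem_excessDegrees hD.1)
  have h_mem := hl.sub_degree_mem_excessDegrees hK.1
  rw [sub_sub_cancel, degree_sub, degree_canonical] at h_mem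
  have h_ge := hD.2 h_mem
  linarith

end RiemannRoch

section Subdivision

variable (n : G.E → ℕ)

lemma subdivide_ends_zero_fst (e : G.E) :
    ((G.subdivide n).ends ⟨e, 0⟩).1 = Sum.inl (G.ends e).1 := rfl

lemma subdivide_ends_succ_fst (e : G.E) (j : Fin (n e)) :
    ((G.subdivide n).ends ⟨e, j.succ⟩).1 = Sum.inr ⟨e, j⟩ := rfl

lemma subdivide_ends_last_snd (e : G.E) :
    ((G.subdivide n).ends ⟨e, Fin.last (n e)⟩).2 = Sum.inl (G.ends e).2 :=
  dif_pos rfl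

lemma subdivide_ends_castSucc_snd (e : G.E) (j : Fin (n e)) :
    ((G.subdivide n).ends ⟨e, j.castSucc⟩).2 = Sum.inr ⟨e, j⟩ :=
  dif_neg j.isLt.ne

lemma sum_subdivide_ends_fst {M : Type*} [AddCommMonoid M] (F : (G.subdivide n).V → M) :
    ∑ x, F ((G.subdivide n).ends x).1 =
      ∑ e, F (Sum.inl (G.ends e).1) + ∑ y : Σ e, Fin (n e), F (Sum.inr y) := by
  rw [Fintype.sum_sigma, ← sum_add_distrib]
  refine (Fintype.sum_sigma _).trans (sum_congr rfl fun e _ => ?_)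
  simp only [Fin.sum_univ_succ, subdivide_ends_zero_fst, subdivide_ends_succ_fst]

lemma sum_subdivide_ends_snd {M : Type*} [AddCommMonoid M] (F : (G.subdivide n).V → M) :
    ∑ x, F ((G.subdivide n).ends x).2 =
      ∑ e, F (Sum.inl (G.ends e).2) + ∑ y : Σ e, Fin (n e), F (Sum.inr y) := by
  rw [add_comm, Fintype.sum_sigma, ← sum_add_distrib]
  refine (Fintype.sum_sigma _).trans (sum_congr rfl fun e _ => ?_)
  simp only [Fin.sum_univ_castSucc, subdivide_ends_castSucc_snd, subdivide_ends_last_snd]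

lemma subdivide_valency (x : (G.subdivide n).V) :
    (G.subdivide n).valency x = Sum.elim G.valency (fun _ => 2) x := by
  let δ (y : (G.subdivide n).V) : ℕ := if y = x then 1 else 0
  have h_sum : (G.subdivide n).valency x =
      ∑ e, δ (Sum.inl (G.ends e).1) + ∑ y : Σ e, Fin (n e), δ (Sum.inr y)
        + (∑ e, δ (Sum.inl (G.ends e).2) + ∑ y : Σ e, Fin (n e), δ (Sum.inr y)) := by
    rw [← sum_subdivide_ends_fst, ← sum_subdivide_ends_snd, ← sum_add_distrib]
    rfl
  rcases x with v | x
  · have h_inl (u : G.V) : δ (Sum.inl u) = if u = v then 1 else 0 :=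
      ite_congr (propext Sum.inl_injective.eq_iff) (fun _ => rfl) (fun _ => rfl)
    have h_inr (y : Σ e, Fin (n e)) : δ (Sum.inr y) = 0 := if_neg Sum.inr_ne_inl
    rw [h_sum]
    simp [h_inl, h_inr, valency, sum_add_distrib]
  · have h_inl (u : G.V) : δ (Sum.inl u) = 0 := if_neg Sum.inl_ne_inr
    have h_inr (y : Σ e, Fin (n e)) : δ (Sum.inr y) = if y = x then 1 else 0 :=
      ite_congr (propext Sum.inr_injective.eq_iff) (fun _ => rfl) (fun _ => rfl)
    rw [h_sum]
    simp [h_inl, h_inr]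

lemma subdivide_canonical : (G.subdivide n).canonical = G.subdivMap n G.canonical := by
  funext x
  rw [canonical, subdivide_valency]
  rcases x with v | x <;> rfl

lemma subdivide_genus : (G.subdivide n).genus = G.genus := by
  have hE : Fintype.card (G.subdivide n).E = ∑ e, n e + Fintype.card G.E := by
    refine Fintype.card_sigma.trans ?_
    simp [sum_add_distrib]
  have hV : Fintype.card (G.subdivide n).V = Fintype.card G.V + ∑ e, n e := by
    refine Fintype.card_sum.trans ?_
    simp
  rw [genus, genus, hE, hV]
  push_cast
  ring

lemma degree_subdivMap (D : G.V → ℤ) : degree (G.subdivMap n D) = degree D := by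
  refine (Fintype.sum_sum_type _).trans ?_
  simp [subdivMap, degree]

lemma subdivMap_sub (D E : G.V → ℤ) :
    G.subdivMap n (D - E) = G.subdivMap n D - G.subdivMap n E := by
  funext x
  rcases x with v | x <;> rfl

variable {n} in
lemma loopless_subdivide (hn : ∀ e, (G.ends e).1 = (G.ends e).2 → n e ≠ 0) :
    (G.subdivide n).Loopless := by
  rintro ⟨e, i⟩ hi
  simp only [subdivide] at hi
  split_ifs at hi with h_first h_last
  · exact hn e (Sum.inl_injective hi) (h_last.symm.trans h_first)
  · simp only [Sum.inr.injEq, Sigma.mk.injEq, heq_eq_eq, true_and, Fin.mk.injEq] at hi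
    omega

variable {G} in
lemma reflTransGen_adj_symm {v w : G.V} (h : Relation.ReflTransGen G.Adj v w) :
    Relation.ReflTransGen G.Adj w v := by
  have : Std.Symm G.Adj := ⟨fun _ _ ⟨e, he⟩ => ⟨e, he.symm⟩⟩
  exact symm h

lemma subdivide_reflTransGen_adj_snd (e : G.E) (i : Fin (n e + 1)) :
    Relation.ReflTransGen (G.subdivide n).Adj (Sum.inl (G.ends e).1)
      ((G.subdivide n).ends ⟨e, i⟩).2 := by
  have h_adj (i : Fin (n e + 1)) :
      (G.subdivide n).Adj ((G.subdivide n).ends ⟨e, i⟩).1 ((G.subdivide n).ends ⟨e, i⟩).2 :=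
    ⟨⟨e, i⟩, .inl rfl⟩
  induction i using Fin.induction with
  | zero => exact .single (h_adj 0)
  | succ j ih =>
    rw [subdivide_ends_castSucc_snd] at ih
    exact ih.tail (h_adj j.succ)

variable {G}

lemma Connected.subdivide (hG : G.Connected) : (G.subdivide n).Connected := by
  have h_adj {v w : G.V} (hvw : G.Adj v w) :
      Relation.ReflTransGen (G.subdivide n).Adj (Sum.inl v) (Sum.inl w) := by
    obtain ⟨e, he⟩ := hvw
    have h_edge := G.subdivide_reflTransGen_adj_snd n e (Fin.last _)
    rw [subdivide_ends_last_snd] at h_edge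
    rcases he with he | he <;> rw [he] at h_edge
    exacts [h_edge, reflTransGen_adj_symm h_edge]
  have h_old (v w : G.V) : Relation.ReflTransGen (G.subdivide n).Adj (Sum.inl v) (Sum.inl w) :=
    (hG.2 v w).lift' Sum.inl fun _ _ => h_adj
  obtain ⟨v₀⟩ := hG.1
  have h_base (x : (G.subdivide n).V) :
      Relation.ReflTransGen (G.subdivide n).Adj (Sum.inl v₀) x := by
    rcases x with v | ⟨e, j⟩
    · exact h_old v₀ v
    · have h_new := G.subdivide_reflTransGen_adj_snd n e j.castSucc
      rw [subdivide_ends_castSucc_snd] at h_new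
      exact (h_old v₀ _).trans h_new
  exact ⟨⟨Sum.inl v₀⟩, fun x y => (reflTransGen_adj_symm (h_base x)).trans (h_base y)⟩

end Subdivision

end Multigraph

theorem riemann_roch_graph_with_loops_general {G : Multigraph} (hG : G.Connected) {n : G.E → ℕ}
    (hn : ∀ e, (G.ends e).1 = (G.ends e).2 → n e ≠ 0) (D : G.V → ℤ) :
    (G.subdivide n).rank (G.subdivMap n D)
        - (G.subdivide n).rank (G.subdivMap n (G.canonical - D))
      = Multigraph.degree D - G.genus + 1 := by
  rw [G.subdivMap_sub, ← G.subdivide_canonical, ← G.degree_subdivMap n, ← G.subdivide_genus n]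
  exact (hG.subdivide n).riemann_roch_of_loopless (G.loopless_subdivide hn) _

open Multigraph in
/-- Riemann–Roch for graphs with loops.  For a connected graph `G`
of genus `g = |E| - |V| + 1` and any divisor `D`,
`r#_G(D) - r#_G(K#_G - D) = deg D - g + 1`. -/
theorem riemann_roch_graph_with_loops (G : Multigraph) (hG : G.Connected) (D : G.V → ℤ) :
    G.rankSharp D - G.rankSharp (G.canonical - D) = Multigraph.degree D - G.genus + 1 :=
  riemann_roch_graph_with_loops_general hG (fun _ he => (if_pos he).trans_ne one_ne_zero) D
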